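/- Let N = (S, A, T) be a P/T Petri net. If R ⊆ S × S is a place bisimulation, then the set M(R) of all linkings over R (i.e., all finite multisets of pairs drawn from R) is a structure-preserving bisimulation. -/

import Mathlib

/-- A transition of a P/T net: a triple (pre-set, label, post-set). -/
structure PNTrans (S A : Type) where
  pre : Multiset S
  label : A
  post : Multiset S
deriving DecidableEq

/-- A P/T Petri net over places `S` and labels `A`: a finite set of transitions,
each with a nonempty pre-set. -/
structure PetriNet (S A : Type) [DecidableEq S] [DecidableEq A] where
  T : Finset (PNTrans S A)
  pre_ne : ∀ t ∈ T, t.pre ≠ 0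

/-- The additive closure `R⊕` of a place relation `R`: the least relation on markings
containing `(θ, θ)` and closed under adding `R`-related places on both sides. -/
inductive AddClosure {S : Type} (R : S → S → Prop) : Multiset S → Multiset S → Prop
  | zero : AddClosure R 0 0
  | cons {s1 s2 : S} {m1 m2 : Multiset S} :
      R s1 s2 → AddClosure R m1 m2 → AddClosure R (s1 ::ₘ m1) (s2 ::ₘ m2)

/-- `Fires N m t m'` : transition `t` of `N` is enabled at marking `m` and its firing
produces `m' = (m ⊖ pre(t)) ⊕ post(t)`. -/
def Fires {S A : Type} [DecidableEq S] [DecidableEq A]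
    (N : PetriNet S A) (m : Multiset S) (t : PNTrans S A) (m' : Multiset S) : Prop :=
  t ∈ N.T ∧ t.pre ≤ m ∧ m' = m - t.pre + t.post

/-- A place bisimulation on `N`. -/
def IsPlaceBisim {S A : Type} [DecidableEq S] [DecidableEq A]
    (N : PetriNet S A) (R : S → S → Prop) : Prop :=
  ∀ m1 m2, AddClosure R m1 m2 →
    (∀ t1 m1', Fires N m1 t1 m1' →
      ∃ t2 m2', Fires N m2 t2 m2' ∧ AddClosure R t1.pre t2.pre ∧
        t1.label = t2.label ∧ AddClosure R t1.post t2.post ∧ AddClosure R m1' m2') ∧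
    (∀ t2 m2', Fires N m2 t2 m2' →
      ∃ t1 m1', Fires N m1 t1 m1' ∧ AddClosure R t1.pre t2.pre ∧
        t1.label = t2.label ∧ AddClosure R t1.post t2.post ∧ AddClosure R m1' m2')

/-- Place bisimilarity `m1 ~p m2`. -/
def PlaceBisimilar {S A : Type} [DecidableEq S] [DecidableEq A]
    (N : PetriNet S A) (m1 m2 : Multiset S) : Prop :=
  ∃ R : S → S → Prop, IsPlaceBisim N R ∧ AddClosure R m1 m2

/-- An interleaving bisimulation on the markings of `N`. -/
def IsIntBisim {S A : Type} [DecidableEq S] [DecidableEq A]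
    (N : PetriNet S A) (Q : Multiset S → Multiset S → Prop) : Prop :=
  ∀ m1 m2, Q m1 m2 →
    (∀ t1 m1', Fires N m1 t1 m1' →
      ∃ t2 m2', Fires N m2 t2 m2' ∧ t1.label = t2.label ∧ Q m1' m2') ∧
    (∀ t2 m2', Fires N m2 t2 m2' →
      ∃ t1 m1', Fires N m1 t1 m1' ∧ t1.label = t2.label ∧ Q m1' m2')

/-- Interleaving bisimilarity `m1 ~int m2`. -/
def IntBisimilar {S A : Type} [DecidableEq S] [DecidableEq A]
    (N : PetriNet S A) (m1 m2 : Multiset S) : Prop :=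
  ∃ Q, IsIntBisim N Q ∧ Q m1 m2

/-- First projection of a linking. -/
def lproj1 {S : Type} (l : Multiset (S × S)) : Multiset S := l.map Prod.fst

/-- Second projection of a linking. -/
def lproj2 {S : Type} (l : Multiset (S × S)) : Multiset S := l.map Prod.snd

/-- A structure-preserving bisimulation on `N`: a set of linkings. -/
def IsSpBisim {S A : Type} [DecidableEq S] [DecidableEq A]
    (N : PetriNet S A) (R : Set (Multiset (S × S))) : Prop :=
  ∀ l ∈ R, ∀ c ≤ l,
    (∀ t1 ∈ N.T, t1.pre = lproj1 c →
      ∃ t2 ∈ N.T, t1.label = t2.label ∧ t2.pre = lproj2 c ∧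
        ∃ cb : Multiset (S × S), t1.post = lproj1 cb ∧ t2.post = lproj2 cb ∧
          l - c + cb ∈ R) ∧
    (∀ t2 ∈ N.T, t2.pre = lproj2 c →
      ∃ t1 ∈ N.T, t1.label = t2.label ∧ t1.pre = lproj1 c ∧
        ∃ cb : Multiset (S × S), t1.post = lproj1 cb ∧ t2.post = lproj2 cb ∧
          l - c + cb ∈ R)

/-- Structure-preserving bisimilarity `m1 ~sp m2`. -/
def SpBisimilar {S A : Type} [DecidableEq S] [DecidableEq A]
    (N : PetriNet S A) (m1 m2 : Multiset S) : Prop :=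
  ∃ (R : Set (Multiset (S × S))) (l : Multiset (S × S)),
    IsSpBisim N R ∧ l ∈ R ∧ lproj1 l = m1 ∧ lproj2 l = m2

/-!
A linking over `R` witnesses that its two projections are related by `R⊕`, and every `R⊕`-related
pair of markings arises in this way; in particular `R⊕`-related markings have the same size. Hence,
when the place bisimulation game is played from the marking `pre(t₁)`, related to `m` say, the
answering transition `t₂` has `pre(t₂) ⊆ m` and `|pre(t₂)| = |pre(t₁)| = |m|`, so `pre(t₂) = m`.
Playing this on the projections of a sub-linking `c ⊆ l`, and reading `(post(t₁), post(t₂)) ∈ R⊕`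
as a linking, gives the structure-preserving answer.
-/

/-- The set `M(R)` of all linkings over a place relation `R`. -/
def linkings {S : Type} (R : S → S → Prop) : Set (Multiset (S × S)) :=
  {l | ∀ p ∈ l, R p.1 p.2}

section Linkings

variable {S : Type} {R : S → S → Prop} {l c d : Multiset (S × S)}

theorem lproj1_cons (p : S × S) (c : Multiset (S × S)) :
    lproj1 (p ::ₘ c) = p.1 ::ₘ lproj1 c :=
  Multiset.map_cons Prod.fst p c

theorem lproj2_cons (p : S × S) (c : Multiset (S × S)) :
    lproj2 (p ::ₘ c) = p.2 ::ₘ lproj2 c :=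
  Multiset.map_cons Prod.snd p c

theorem mem_linkings_of_le (hl : l ∈ linkings R) (hcl : c ≤ l) : c ∈ linkings R :=
  fun p hp => hl p (Multiset.mem_of_le hcl hp)

theorem add_mem_linkings (hc : c ∈ linkings R) (hd : d ∈ linkings R) : c + d ∈ linkings R :=
  fun p hp => (Multiset.mem_add.1 hp).elim (hc p) (hd p)

theorem sub_add_mem_linkings [DecidableEq S] (hl : l ∈ linkings R) (c : Multiset (S × S))
    (hd : d ∈ linkings R) : l - c + d ∈ linkings R :=
  add_mem_linkings (mem_linkings_of_le hl (Multiset.sub_le_self l c)) hd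

end Linkings

section AddClosure

variable {S : Type} {R : S → S → Prop} {m1 m2 : Multiset S}

theorem addClosure_iff_exists_linking :
    AddClosure R m1 m2 ↔ ∃ c ∈ linkings R, m1 = lproj1 c ∧ m2 = lproj2 c := by
  constructor
  · intro h
    induction h with
    | zero => exact ⟨0, fun p hp => absurd hp (Multiset.notMem_zero p), rfl, rfl⟩
    | @cons s1 s2 _ _ hs _ ih =>
      obtain ⟨c, hc, rfl, rfl⟩ := ih
      exact ⟨(s1, s2) ::ₘ c, Multiset.forall_mem_cons.2 ⟨hs, hc⟩,
        (lproj1_cons (s1, s2) c).symm, (lproj2_cons (s1, s2) c).symm⟩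
  · rintro ⟨c, hc, rfl, rfl⟩
    induction c using Multiset.induction_on with
    | empty => exact .zero
    | cons p c ih =>
      obtain ⟨hp, hc⟩ := Multiset.forall_mem_cons.1 hc
      simpa only [lproj1_cons, lproj2_cons] using .cons hp (ih hc)

theorem AddClosure.card_eq (h : AddClosure R m1 m2) : m1.card = m2.card := by
  obtain ⟨c, -, rfl, rfl⟩ := addClosure_iff_exists_linking.1 h
  simp only [lproj1, lproj2, Multiset.card_map]

theorem AddClosure.flip (h : AddClosure R m1 m2) : AddClosure (flip R) m2 m1 := by
  induction h with
  | zero => exact .zero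
  | cons hs _ ih => exact .cons hs ih

end AddClosure

section PlaceBisim

variable {S A : Type} [DecidableEq S] [DecidableEq A] {N : PetriNet S A} {R : S → S → Prop}

theorem IsPlaceBisim.flip (h : IsPlaceBisim N R) : IsPlaceBisim N (flip R) := by
  intro m1 m2 hm
  obtain ⟨forth, back⟩ := h m2 m1 hm.flip
  constructor
  · intro t1 m1' hfire
    obtain ⟨t2, m2', hfire', hpre, hlabel, hpost, hm'⟩ := back t1 m1' hfire
    exact ⟨t2, m2', hfire', hpre.flip, hlabel.symm, hpost.flip, hm'.flip⟩
  · intro t2 m2' hfire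
    obtain ⟨t1, m1', hfire', hpre, hlabel, hpost, hm'⟩ := forth t2 m2' hfire
    exact ⟨t1, m1', hfire', hpre.flip, hlabel.symm, hpost.flip, hm'.flip⟩

theorem IsPlaceBisim.exists_pre_eq (h : IsPlaceBisim N R) {t1 : PNTrans S A} (ht1 : t1 ∈ N.T)
    {m : Multiset S} (hm : AddClosure R t1.pre m) :
    ∃ t2 ∈ N.T, t1.label = t2.label ∧ t2.pre = m ∧ AddClosure R t1.post t2.post := by
  obtain ⟨t2, _, ⟨ht2, hle, _⟩, hpre, hlabel, hpost, _⟩ :=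
    (h _ _ hm).1 t1 _ ⟨ht1, le_rfl, rfl⟩
  have hcard : m.card ≤ t2.pre.card := (hm.card_eq.symm.trans hpre.card_eq).le
  exact ⟨t2, ht2, hlabel, Multiset.eq_of_le_of_card_le hle hcard, hpost⟩

theorem placeBisim_linkings_spBisim_general (h : IsPlaceBisim N R) :
    IsSpBisim N (linkings R) := by
  intro l hl c hcl
  have hc : AddClosure R (lproj1 c) (lproj2 c) :=
    addClosure_iff_exists_linking.2 ⟨c, mem_linkings_of_le hl hcl, rfl, rfl⟩
  constructor
  · intro t1 ht1 hpre1
    obtain ⟨t2, ht2, hlabel, hpre2, hpost⟩ := h.exists_pre_eq ht1 (hpre1 ▸ hc)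
    obtain ⟨d, hd, hd1, hd2⟩ := addClosure_iff_exists_linking.1 hpost
    exact ⟨t2, ht2, hlabel, hpre2, d, hd1, hd2, sub_add_mem_linkings hl c hd⟩
  · intro t2 ht2 hpre2
    obtain ⟨t1, ht1, hlabel, hpre1, hpost⟩ := h.flip.exists_pre_eq ht2 (hpre2 ▸ hc.flip)
    obtain ⟨d, hd, hd1, hd2⟩ := addClosure_iff_exists_linking.1 hpost.flip
    exact ⟨t1, ht1, hlabel.symm, hpre1, d, hd1, hd2, sub_add_mem_linkings hl c hd⟩

end PlaceBisim

/-- if `R` is a place bisimulation then the set `M(R)` of all linkings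
over `R` is a structure-preserving bisimulation. -/
theorem placeBisim_linkings_spBisim {S A : Type} [Fintype S] [Fintype A]
    [DecidableEq S] [DecidableEq A] (N : PetriNet S A)
    (R : S → S → Prop) (h : IsPlaceBisim N R) :
    IsSpBisim N {l : Multiset (S × S) | ∀ p ∈ l, R (Prod.fst p) (Prod.snd p)} :=
  placeBisim_linkings_spBisim_general h
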